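/- Assume the set of well-formed formulas is countable (e.g. there are countably many propositional variables). Let Q be a well-formed formula. Every Q-consistent extension M of the implicational propositional calculus has an extension N that is both Q-complete and Q-consistent. -/

import Mathlib

/-- Well-formed formulas of the implicational propositional calculus:
propositional variables (indexed by ℕ, so the set of wfs is countable)
and the single connective ⊃. -/
inductive Wf where
  | var : ℕ → Wf
  | imp : Wf → Wf → Wf
deriving DecidableEq

infixr:60 " ⊃' " => Wf.imp

/-- `Deduces Γ A` : `A` is deducible from the set `Γ` of extra axioms/hypotheses,
using the three axiom schemes of IPC (including the Peirce scheme) and modus ponens.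
Theorems of IPC are `Deduces ∅ A`; for an extension `M` of IPC with extra-axiom
set `E`, `T(M)` is `Deduces E`, and deducibility from hypotheses `Γ` in `M` is
`Deduces (E ∪ Γ)`. -/
inductive Deduces : Set Wf → Wf → Prop where
  | hyp : ∀ {Γ : Set Wf} {A : Wf}, A ∈ Γ → Deduces Γ A
  | ax1 : ∀ {Γ : Set Wf} (A B : Wf), Deduces Γ (A ⊃' (B ⊃' A))
  | ax2 : ∀ {Γ : Set Wf} (A B C : Wf),
      Deduces Γ ((A ⊃' (B ⊃' C)) ⊃' ((A ⊃' B) ⊃' (A ⊃' C)))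
  | peirce : ∀ {Γ : Set Wf} (A B : Wf), Deduces Γ (((A ⊃' B) ⊃' A) ⊃' A)
  | mp : ∀ {Γ : Set Wf} {A B : Wf}, Deduces Γ (A ⊃' B) → Deduces Γ A → Deduces Γ B

theorem Deduces.mono {G H : Set Wf} {A : Wf} (h : Deduces G A) : G ⊆ H → Deduces H A := by
  induction h with
  | hyp h => exact fun hs => .hyp (hs h)
  | ax1 A B => exact fun _ => .ax1 A B
  | ax2 A B C => exact fun _ => .ax2 A B C
  | peirce A B => exact fun _ => .peirce A B
  | mp _ _ ih1 ih2 => exact fun hs => .mp (ih1 hs) (ih2 hs)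

theorem Deduces.lift {G : Set Wf} {A : Wf} (B : Wf) (h : Deduces G A) :
    Deduces G (B ⊃' A) := .mp (.ax1 A B) h

theorem Deduces.self (G : Set Wf) (A : Wf) : Deduces G (A ⊃' A) :=
  .mp (.mp (.ax2 A (A ⊃' A) A) (.ax1 A (A ⊃' A))) (.ax1 A A)

theorem Deduces.deduction {F H : Set Wf} {A B : Wf} (h : Deduces H B) :
    H = insert A F → Deduces F (A ⊃' B) := by
  induction h with
  | hyp h =>
    rintro rfl
    rcases h with rfl | h
    · exact Deduces.self _ _
    · exact (Deduces.hyp h).lift A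
  | ax1 C D => exact fun _ => (Deduces.ax1 C D).lift A
  | ax2 C D E => exact fun _ => (Deduces.ax2 C D E).lift A
  | peirce C D => exact fun _ => (Deduces.peirce C D).lift A
  | mp _ _ ih1 ih2 => exact fun hs => .mp (.mp (.ax2 _ _ _) (ih1 hs)) (ih2 hs)

theorem Deduces.chain {c : Set (Set Wf)} (hc : IsChain (· ⊆ ·) c) (hne : c.Nonempty)
    {H : Set Wf} {B : Wf} (h : Deduces H B) : H = ⋃₀ c → ∃ s ∈ c, Deduces s B := by
  obtain ⟨t, ht⟩ := hne
  induction h with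
  | hyp h =>
    rintro rfl
    obtain ⟨s, hs, h⟩ := h
    exact ⟨s, hs, .hyp h⟩
  | ax1 C D => exact fun _ => ⟨t, ht, .ax1 C D⟩
  | ax2 C D E => exact fun _ => ⟨t, ht, .ax2 C D E⟩
  | peirce C D => exact fun _ => ⟨t, ht, .peirce C D⟩
  | mp _ _ ih1 ih2 =>
    intro hs
    obtain ⟨s1, h1, d1⟩ := ih1 hs
    obtain ⟨s2, h2, d2⟩ := ih2 hs
    rcases hc.total h1 h2 with h | h
    · exact ⟨s2, h2, .mp (d1.mono h) d2⟩
    · exact ⟨s1, h1, .mp d1 (d2.mono h)⟩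

/-- Theorem 4 (Lindenbaum step): every Q-consistent extension M of IPC
(extra axioms E) has a Q-complete Q-consistent extension N (extra axioms F,
with E ⊆ F).  (The set of wfs is countable since variables are indexed by ℕ.) -/
theorem stmt_12 (Q : Wf) (E : Set Wf) (hcons : ¬ Deduces E Q) :
    ∃ F : Set Wf, E ⊆ F ∧ ¬ Deduces F Q ∧
      ∀ A : Wf, Deduces F ((A ⊃' Q) ⊃' Q) ∨ Deduces F (A ⊃' Q) := by
  obtain ⟨F, hEF, hF⟩ := zorn_subset_nonempty {s : Set Wf | ¬ Deduces s Q}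
    (by
      intro c hcS hc hne
      refine ⟨⋃₀ c, ?_, fun s hs => Set.subset_sUnion_of_mem hs⟩
      intro hd
      obtain ⟨s, hs, d⟩ := Deduces.chain hc hne hd rfl
      exact hcS hs d) E hcons
  refine ⟨F, hEF, hF.prop, fun A => ?_⟩
  by_cases hA : Deduces (insert A F) Q
  · exact Or.inr (Deduces.deduction hA rfl)
  · left
    have hAF : A ∈ F := hF.le_of_ge hA (Set.subset_insert A F) (Set.mem_insert A F)
    exact .mp (.mp (.ax2 _ _ _) (Deduces.self _ _)) ((Deduces.hyp hAF).lift _)
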